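/- Assume φ₀ < 0 and f(ρ₀, φ₀) = 0. Then the unique critical point of X in the closed disk D_R is the point (x_p*, 0) with x_p* = (R² + r₀² − √(R⁴ − R²r₀² + r₀⁴))/(3r₀), and at this point the Jacobian matrix of X is nonzero and nilpotent (its determinant and trace both vanish but the matrix itself is not zero), i.e. (x_p*, 0) is a cusp-type degenerate singular point. (Case (h) of Theorem 1.) -/

import Mathlib

/-!
On the symmetry axis the vortex field is vertical and equals `θ p(x) / ((x - a) (x - b))`, where
`p(x) = x (x - a) (x - b) - c (a - b)` is a cubic whose smaller critical point is `x_p*`; up to a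
nonzero factor, `f(ρ₀, φ₀)` is the critical value `p(x_p*)`. So `f(ρ₀, φ₀) = 0` makes `x_p*` a
double zero of `p`, which kills the lower left entry of the Jacobian matrix; the diagonal always
vanishes on the axis, and the upper right entry differs from the lower left one by `-2 θ`.

For `c < 0` the rotation and the vortex pair push the horizontal component in the same direction at
points nearer to `a` than to `b`, so in that half-plane, which contains `D_R`, zeros can only lie on
the axis. There the only competitor of `x_p*` is the third zero of `p`, which Vieta's formulas place
on the other side of the bisector.
-/

/-- The Jacobian matrix of a planar vector field `X : ℝ → ℝ → ℝ × ℝ` at the point `(x, y)`. -/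
noncomputable def jacobianMatrix (X : ℝ → ℝ → ℝ × ℝ) (x y : ℝ) : Matrix (Fin 2) (Fin 2) ℝ :=
  !![deriv (fun s => (X s y).1) x, deriv (fun s => (X x s).1) y;
     deriv (fun s => (X s y).2) x, deriv (fun s => (X x s).2) y]

/-- The planar field of a rigid rotation of angular velocity `θ` about the origin together with two
opposite point vortices at `(a, 0)` and `(b, 0)`. The vortex in a disk of radius `R` is the case
`a = r₀`, `b = R ^ 2 / r₀`. Division by zero makes a vortex contribute `0` at its own centre. -/
noncomputable def vortexField (θ c a b x y : ℝ) : ℝ × ℝ :=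
  (-θ * y + c * θ * y * (1 / ((x - a) ^ 2 + y ^ 2) - 1 / ((x - b) ^ 2 + y ^ 2)),
   θ * x - c * θ * ((x - a) / ((x - a) ^ 2 + y ^ 2) - (x - b) / ((x - b) ^ 2 + y ^ 2)))

/-- The cubic whose zeros are the critical points of `vortexField θ c a b` on the `x`-axis: the
numerator of the vertical component there. -/
def axisCubic (c a b x : ℝ) : ℝ :=
  x * (x - a) * (x - b) - c * (a - b)

/-- A zero of multiplicity at least two of the function `p`, which is meant to be differentiable:
`deriv` is `0` where `p` is not. -/
def IsDoubleZero (p : ℝ → ℝ) (x : ℝ) : Prop :=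
  p x = 0 ∧ deriv p x = 0

/-- The function `f(ρ, φ)` whose vanishing at `ρ = r₀ / R`, `φ = R ^ 2 / c` makes `x_p*` a double
zero of the axis cubic. -/
noncomputable def cuspDiscriminant (ρ φ : ℝ) : ℝ :=
  27 * ρ ^ 2 * (ρ ^ 2 - 1) +
    φ * (2 - 3 * ρ ^ 2 - 3 * ρ ^ 4 + 2 * ρ ^ 6 - 2 * (1 - ρ ^ 2 + ρ ^ 4) ^ ((3 : ℝ) / 2))

section Cubic

variable {a b c d x x₀ : ℝ}

lemma deriv_axisCubic (c a b x : ℝ) :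
    deriv (axisCubic c a b) x = 3 * x ^ 2 - 2 * (a + b) * x + a * b := by
  have h := (((hasDerivAt_id x).mul ((hasDerivAt_id x).sub_const a)).mul
    ((hasDerivAt_id x).sub_const b)).sub_const (c * (a - b))
  refine (h.congr_deriv ?_).deriv
  simp only [Pi.mul_apply, id_eq]
  ring

lemma ne_poles_of_axisCubic_eq_zero (hc : c ≠ 0) (hab : a ≠ b) (hx : axisCubic c a b x = 0) :
    x ≠ a ∧ x ≠ b := by
  have hcab : c * (a - b) ≠ 0 := mul_ne_zero hc (sub_ne_zero.2 hab)
  unfold axisCubic at hx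
  constructor <;> rintro rfl <;> exact hcab (by linear_combination -hx)

lemma deriv_axisCubic_eq_zero (c : ℝ) (hd : d ^ 2 = a ^ 2 - a * b + b ^ 2) :
    deriv (axisCubic c a b) ((a + b - d) / 3) = 0 := by
  rw [deriv_axisCubic]
  linear_combination hd / 3

lemma axisCubic_criticalValue (c : ℝ) (hd : d ^ 2 = a ^ 2 - a * b + b ^ 2) :
    27 * axisCubic c a b ((a + b - d) / 3) =
      2 * d ^ 3 - (a + b) * (2 * a - b) * (a - 2 * b) - 27 * c * (a - b) := by
  unfold axisCubic
  linear_combination (-3 * d) * hd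

lemma IsDoubleZero.axisCubic_eq (h : IsDoubleZero (axisCubic c a b) x₀) (x : ℝ) :
    axisCubic c a b x = (x - x₀) ^ 2 * (x - (a + b - 2 * x₀)) := by
  obtain ⟨h₀, h₁⟩ := h
  rw [deriv_axisCubic] at h₁
  unfold axisCubic at h₀ ⊢
  linear_combination h₀ + (x - x₀) * h₁

lemma IsDoubleZero.four_mul_lt_add (h : IsDoubleZero (axisCubic c a b) x₀) (hc : c < 0)
    (hab : a < b) : 4 * x₀ < a + b := by
  let x₁ := a + b - 2 * x₀
  have hprod : x₀ ^ 2 * x₁ = c * (a - b) := by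
    have hvalue := h.axisCubic_eq 0
    unfold axisCubic at hvalue
    linear_combination hvalue
  have hdisc : x₁ * (x₁ - 4 * x₀) = (a - b) ^ 2 := by
    have hderiv := h.2
    rw [deriv_axisCubic] at hderiv
    linear_combination 4 * hderiv
  have hx₁pos : 0 < x₁ := by
    refine pos_of_mul_pos_right (a := x₀ ^ 2) ?_ (sq_nonneg x₀)
    rw [hprod]
    exact mul_pos_of_neg_of_neg hc (sub_neg.2 hab)
  have hgap : 0 < x₁ - 4 * x₀ := by
    refine pos_of_mul_pos_right (a := x₁) ?_ hx₁pos.le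
    rw [hdisc]
    exact sq_pos_of_neg (sub_neg.2 hab)
  linarith

lemma IsDoubleZero.eq_of_axisCubic_eq_zero (h : IsDoubleZero (axisCubic c a b) x₀) (hc : c < 0)
    (hab : a < b) (hmid : 2 * x ≤ a + b) (hx : axisCubic c a b x = 0) : x = x₀ := by
  have hsimple : x - (a + b - 2 * x₀) ≠ 0 := by
    have hlt : x - (a + b - 2 * x₀) < 0 := by linarith [h.four_mul_lt_add hc hab]
    exact hlt.ne
  rw [h.axisCubic_eq] at hx
  have hsq : (x - x₀) ^ 2 = 0 := (mul_eq_zero.1 hx).resolve_right hsimple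
  exact sub_eq_zero.1 (pow_eq_zero_iff two_ne_zero |>.1 hsq)

lemma IsDoubleZero.mul_inv_sq_sub_inv_sq (h : IsDoubleZero (axisCubic c a b) x₀) (ha : x₀ ≠ a)
    (hb : x₀ ≠ b) : c * (((x₀ - a) ^ 2)⁻¹ - ((x₀ - b) ^ 2)⁻¹) = -1 := by
  obtain ⟨h₀, h₁⟩ := h
  rw [deriv_axisCubic] at h₁
  unfold axisCubic at h₀
  have ha' := sub_ne_zero.2 ha
  have hb' := sub_ne_zero.2 hb
  field_simp
  linear_combination (a + b - 2 * x₀) * h₀ + (x₀ - a) * (x₀ - b) * h₁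

end Cubic

section CriticalPoints

variable {θ a b c x y x₀ : ℝ}

lemma vortexField_axis (θ c a b x : ℝ) :
    vortexField θ c a b x 0 = (0, θ * (x - c * ((x - a)⁻¹ - (x - b)⁻¹))) := by
  have hinv (t : ℝ) : t / t ^ 2 = t⁻¹ := by rw [sq, div_self_mul_self']
  simp only [vortexField, ne_eq, OfNat.ofNat_ne_zero, not_false_eq_true, zero_pow, add_zero,
    mul_zero, zero_mul, hinv]
  ring_nf

lemma vortexField_axis_eq_zero_iff (hθ : θ ≠ 0) (ha : x ≠ a) (hb : x ≠ b) :
    vortexField θ c a b x 0 = (0, 0) ↔ axisCubic c a b x = 0 := by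
  have ha' := sub_ne_zero.2 ha
  have hb' := sub_ne_zero.2 hb
  have hquot : x - c * ((x - a)⁻¹ - (x - b)⁻¹) = axisCubic c a b x / ((x - a) * (x - b)) := by
    unfold axisCubic
    field_simp
    ring
  simp [vortexField_axis, hquot, hθ, ha', hb']

lemma eq_zero_of_vortexField_eq_zero (hθ : θ ≠ 0) (hc : c ≤ 0) (hab : a ≤ b)
    (hmid : 2 * x ≤ a + b) (hX : vortexField θ c a b x y = (0, 0)) : y = 0 := by
  by_contra hy
  have hbalance : c * (1 / ((x - a) ^ 2 + y ^ 2) - 1 / ((x - b) ^ 2 + y ^ 2)) = 1 := by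
    apply mul_left_cancel₀ (mul_ne_zero hθ hy)
    linear_combination (Prod.mk.inj hX).1
  have hcloser : (x - a) ^ 2 + y ^ 2 ≤ (x - b) ^ 2 + y ^ 2 := by
    nlinarith [mul_nonneg (sub_nonneg.2 hab) (sub_nonneg.2 hmid)]
  have hstronger := one_div_le_one_div_of_le (by positivity) hcloser
  linarith [mul_nonpos_of_nonpos_of_nonneg hc (sub_nonneg.2 hstronger)]

lemma eq_of_vortexField_eq_zero (hθ : θ ≠ 0) (hc : c < 0) (hab : a < b)
    (h : IsDoubleZero (axisCubic c a b) x₀) (hmid : 2 * x ≤ a + b) (hne : (x, y) ≠ (a, 0))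
    (hX : vortexField θ c a b x y = (0, 0)) : (x, y) = (x₀, 0) := by
  obtain rfl := eq_zero_of_vortexField_eq_zero hθ hc.le hab.le hmid hX
  have ha : x ≠ a := by rintro rfl; exact hne rfl
  have hb : x ≠ b := by rintro rfl; linarith
  rw [h.eq_of_axisCubic_eq_zero hc hab hmid ((vortexField_axis_eq_zero_iff hθ ha hb).1 hX)]

end CriticalPoints

section Jacobian

variable {a b c x x₀ : ℝ}

lemma hasDerivAt_div_sq_add_sq_zero (k : ℝ) {t : ℝ} (ht : t ≠ 0) :
    HasDerivAt (fun s : ℝ => k / (t ^ 2 + s ^ 2)) 0 0 := by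
  have hden : HasDerivAt (fun s : ℝ => t ^ 2 + s ^ 2) 0 0 := by
    simpa using ((hasDerivAt_id (0 : ℝ)).pow 2).const_add (t ^ 2)
  simpa using (hasDerivAt_const (0 : ℝ) k).fun_div hden (by positivity)

lemma jacobianMatrix_vortexField_axis (θ c : ℝ) (ha : x ≠ a) (hb : x ≠ b) :
    jacobianMatrix (vortexField θ c a b) x 0 =
      !![0, θ * (c * (((x - a) ^ 2)⁻¹ - ((x - b) ^ 2)⁻¹) - 1);
         θ * (c * (((x - a) ^ 2)⁻¹ - ((x - b) ^ 2)⁻¹) + 1), 0] := by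
  have ha' := sub_ne_zero.2 ha
  have hb' := sub_ne_zero.2 hb
  have h₁₁ : deriv (fun s => (vortexField θ c a b s 0).1) x = 0 := by
    simp only [vortexField_axis, deriv_const]
  have h₁₂ : deriv (fun s => (vortexField θ c a b x s).1) 0 =
      θ * (c * (((x - a) ^ 2)⁻¹ - ((x - b) ^ 2)⁻¹) - 1) := by
    have h := ((hasDerivAt_id (0 : ℝ)).const_mul (-θ)).fun_add
      (((hasDerivAt_id (0 : ℝ)).const_mul (c * θ)).fun_mul
        ((hasDerivAt_div_sq_add_sq_zero 1 ha').fun_sub (hasDerivAt_div_sq_add_sq_zero 1 hb')))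
    refine (h.congr_deriv ?_).deriv
    simp only [id_eq, one_div, ne_eq, OfNat.ofNat_ne_zero, not_false_eq_true, zero_pow, add_zero]
    ring
  have h₂₁ : deriv (fun s => (vortexField θ c a b s 0).2) x =
      θ * (c * (((x - a) ^ 2)⁻¹ - ((x - b) ^ 2)⁻¹) + 1) := by
    simp only [vortexField_axis]
    have h := ((hasDerivAt_id x).fun_sub
      (((((hasDerivAt_id x).sub_const a).fun_inv ha').fun_sub
        (((hasDerivAt_id x).sub_const b).fun_inv hb')).const_mul c)).const_mul θ
    refine (h.congr_deriv ?_).deriv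
    simp only [id_eq, neg_div, one_div]
    ring
  have h₂₂ : deriv (fun s => (vortexField θ c a b x s).2) 0 = 0 := by
    have h := (((hasDerivAt_div_sq_add_sq_zero (x - a) ha').fun_sub
      (hasDerivAt_div_sq_add_sq_zero (x - b) hb')).const_mul (c * θ)).const_sub (θ * x)
    refine (h.congr_deriv ?_).deriv
    simp
  rw [jacobianMatrix, h₁₁, h₁₂, h₂₁, h₂₂]

lemma IsDoubleZero.jacobianMatrix_vortexField (θ : ℝ) (h : IsDoubleZero (axisCubic c a b) x₀)
    (ha : x₀ ≠ a) (hb : x₀ ≠ b) :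
    jacobianMatrix (vortexField θ c a b) x₀ 0 = !![0, -2 * θ; 0, 0] := by
  rw [jacobianMatrix_vortexField_axis θ c ha hb, h.mul_inv_sq_sub_inv_sq ha hb]
  norm_num [mul_comm]

lemma isNilpotent_strictUpper_two {α : Type*} [Semiring α] (t : α) :
    IsNilpotent !![0, t; 0, 0] :=
  ⟨2, by ext i j; fin_cases i <;> fin_cases j <;> simp [pow_two]⟩

end Jacobian

section Disk

/-- The point `x_p*`: the smaller critical point of the cubic of the vortex at `r₀` in the disk of
radius `R`. -/
noncomputable def cuspAbscissa (R r₀ : ℝ) : ℝ :=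
  (R ^ 2 + r₀ ^ 2 - √(R ^ 4 - R ^ 2 * r₀ ^ 2 + r₀ ^ 4)) / (3 * r₀)

variable {R r₀ c x y : ℝ}

lemma lt_sq_div_self (hr₀ : 0 < r₀) (hrR : r₀ < R) : r₀ < R ^ 2 / r₀ := by
  rw [lt_div_iff₀ hr₀]
  nlinarith

lemma two_mul_le_add_sq_div (hr₀ : 0 < r₀) (hxy : x ^ 2 + y ^ 2 ≤ R ^ 2) :
    2 * x ≤ r₀ + R ^ 2 / r₀ := by
  have hgap : r₀ + R ^ 2 / r₀ - 2 * x = ((r₀ - x) ^ 2 + (R ^ 2 - x ^ 2)) / r₀ := by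
    field_simp
    ring
  have hx : 0 ≤ R ^ 2 - x ^ 2 := by linarith [sq_nonneg y]
  have hnonneg : 0 ≤ ((r₀ - x) ^ 2 + (R ^ 2 - x ^ 2)) / r₀ := by positivity
  linarith

lemma cuspAbscissa_eq (R : ℝ) (hr₀ : r₀ ≠ 0) :
    cuspAbscissa R r₀ =
      (r₀ + R ^ 2 / r₀ - √(R ^ 4 - R ^ 2 * r₀ ^ 2 + r₀ ^ 4) / r₀) / 3 := by
  unfold cuspAbscissa
  field_simp
  ring

lemma sq_sqrt_quartic_div (R : ℝ) (hr₀ : r₀ ≠ 0) :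
    (√(R ^ 4 - R ^ 2 * r₀ ^ 2 + r₀ ^ 4) / r₀) ^ 2 =
      r₀ ^ 2 - r₀ * (R ^ 2 / r₀) + (R ^ 2 / r₀) ^ 2 := by
  rw [div_pow, Real.sq_sqrt (by nlinarith [sq_nonneg (R ^ 2 - r₀ ^ 2), sq_nonneg (R * r₀)])]
  field_simp
  ring

lemma one_sub_sq_add_fourth_rpow (r₀ : ℝ) (hR : R ≠ 0) :
    (1 - (r₀ / R) ^ 2 + (r₀ / R) ^ 4) ^ ((3 : ℝ) / 2) =
      (√(R ^ 4 - R ^ 2 * r₀ ^ 2 + r₀ ^ 4) / R ^ 2) ^ 3 := by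
  have hscale : 1 - (r₀ / R) ^ 2 + (r₀ / R) ^ 4 =
      (R ^ 4 - R ^ 2 * r₀ ^ 2 + r₀ ^ 4) / (R ^ 2) ^ 2 := by
    field_simp
  rw [Real.rpow_div_two_eq_sqrt 3 (by nlinarith [sq_nonneg ((r₀ / R) ^ 2 - 1)]), hscale,
    Real.sqrt_div' _ (by positivity), Real.sqrt_sq (by positivity)]
  norm_cast

lemma axisCubic_cuspAbscissa (hR : R ≠ 0) (hr₀ : r₀ ≠ 0) (hc : c ≠ 0) :
    27 * r₀ ^ 3 * axisCubic c r₀ (R ^ 2 / r₀) (cuspAbscissa R r₀) =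
      -(c * R ^ 4) * cuspDiscriminant (r₀ / R) (R ^ 2 / c) := by
  have hvalue := axisCubic_criticalValue c (sq_sqrt_quartic_div R hr₀)
  rw [← cuspAbscissa_eq R hr₀] at hvalue
  rw [mul_right_comm, hvalue, cuspDiscriminant, one_sub_sq_add_fourth_rpow r₀ hR]
  field_simp
  ring

lemma isDoubleZero_cuspAbscissa (hR : R ≠ 0) (hr₀ : r₀ ≠ 0) (hc : c ≠ 0)
    (hf : cuspDiscriminant (r₀ / R) (R ^ 2 / c) = 0) :
    IsDoubleZero (axisCubic c r₀ (R ^ 2 / r₀)) (cuspAbscissa R r₀) := by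
  constructor
  · have h := axisCubic_cuspAbscissa hR hr₀ hc
    rw [hf, mul_zero] at h
    exact (mul_eq_zero.1 h).resolve_left (by positivity)
  · rw [cuspAbscissa_eq R hr₀]
    exact deriv_axisCubic_eq_zero c (sq_sqrt_quartic_div R hr₀)

end Disk

theorem case_h_cusp_general {R r₀ θ c : ℝ} (hr₀ : 0 < r₀) (hrR : r₀ < R) (hθ : θ ≠ 0)
    (hc : c < 0) (hf : cuspDiscriminant (r₀ / R) (R ^ 2 / c) = 0) {X : ℝ → ℝ → ℝ × ℝ}
    (hX : X = vortexField θ c r₀ (R ^ 2 / r₀)) {xp : ℝ} (hxp : xp = cuspAbscissa R r₀) :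
    X xp 0 = (0, 0) ∧
    (∀ x y : ℝ, 2 * x ≤ r₀ + R ^ 2 / r₀ → (x, y) ≠ (r₀, 0) → X x y = (0, 0) →
      (x, y) = (xp, 0)) ∧
    jacobianMatrix X xp 0 ≠ 0 ∧
    IsNilpotent (jacobianMatrix X xp 0) ∧
    (jacobianMatrix X xp 0).det = 0 ∧
    (jacobianMatrix X xp 0).trace = 0 := by
  subst hX hxp
  have hab := lt_sq_div_self hr₀ hrR
  have h := isDoubleZero_cuspAbscissa (hr₀.trans hrR).ne' hr₀.ne' hc.ne hf
  obtain ⟨ha, hb⟩ := ne_poles_of_axisCubic_eq_zero hc.ne hab.ne h.1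
  have hzero := (vortexField_axis_eq_zero_iff hθ ha hb).2 h.1
  refine ⟨hzero, fun x y => eq_of_vortexField_eq_zero hθ hc hab h, ?_⟩
  rw [h.jacobianMatrix_vortexField θ ha hb]
  refine ⟨fun hJ => hθ ?_, isNilpotent_strictUpper_two _, ?_, ?_⟩
  · simpa using congrFun₂ hJ 0 1
  · simp [Matrix.det_fin_two]
  · simp [Matrix.trace_fin_two]

/-- case (h) of Theorem 1: for `φ₀ < 0` and `f(ρ₀, φ₀) = 0` the unique
critical point of `X` in `D_R` is the cusp `(x_p*, 0)`, at which the Jacobian matrix is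
nonzero and nilpotent (its determinant and trace both vanish). -/
theorem case_h_cusp
    (R r₀ θ₀ Γ : ℝ)
    (hR : 0 < R) (hr₀ : 0 < r₀) (hrR : r₀ < R) (hθ : θ₀ ≠ 0) (hΓ : Γ ≠ 0)
    (c ρ₀ φ₀ : ℝ) (hc : c = Γ / (2 * Real.pi * θ₀))
    (hρ : ρ₀ = r₀ / R) (hφ : φ₀ = R ^ 2 / c) (hφneg : φ₀ < 0)
    (fval : ℝ)
    (hf : fval = 27 * ρ₀ ^ 2 * (ρ₀ ^ 2 - 1) +
      φ₀ * (2 - 3 * ρ₀ ^ 2 - 3 * ρ₀ ^ 4 + 2 * ρ₀ ^ 6 -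
        2 * (1 - ρ₀ ^ 2 + ρ₀ ^ 4) ^ ((3 : ℝ) / 2)))
    (hfzero : fval = 0)
    (xp : ℝ)
    (hxp : xp = (R ^ 2 + r₀ ^ 2 - Real.sqrt (R ^ 4 - R ^ 2 * r₀ ^ 2 + r₀ ^ 4)) / (3 * r₀))
    (X : ℝ → ℝ → ℝ × ℝ)
    (hX : ∀ x y : ℝ, X x y =
      (-θ₀ * y + c * θ₀ * y *
          (1 / ((x - r₀) ^ 2 + y ^ 2) - 1 / ((x - R ^ 2 / r₀) ^ 2 + y ^ 2)),
       θ₀ * x - c * θ₀ *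
          ((x - r₀) / ((x - r₀) ^ 2 + y ^ 2) -
            (x - R ^ 2 / r₀) / ((x - R ^ 2 / r₀) ^ 2 + y ^ 2)))) :
    X xp 0 = (0, 0) ∧
    (∀ x y : ℝ, x ^ 2 + y ^ 2 ≤ R ^ 2 → (x, y) ≠ (r₀, 0) → X x y = (0, 0) →
      (x, y) = (xp, 0)) ∧
    jacobianMatrix X xp 0 ≠ 0 ∧
    IsNilpotent (jacobianMatrix X xp 0) ∧
    (jacobianMatrix X xp 0).det = 0 ∧
    (jacobianMatrix X xp 0).trace = 0 := by
  have hcneg : c < 0 := neg_of_div_neg_right (hφ ▸ hφneg) (sq_nonneg R)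
  have hdisc : cuspDiscriminant (r₀ / R) (R ^ 2 / c) = 0 := by
    rw [← hρ, ← hφ, ← hfzero, hf, cuspDiscriminant]
  obtain ⟨hzero, hunique, hJ⟩ :=
    case_h_cusp_general hr₀ hrR hθ hcneg hdisc (funext₂ hX) hxp
  exact ⟨hzero, fun x y hxy => hunique x y (two_mul_le_add_sq_div hr₀ hxy), hJ⟩
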